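/- Let n ≥ 1 and 1 ≤ r ≤ n. The set 𝒮_r of real symmetric n×n matrices whose eigenvalues (listed with multiplicity) lie in the Gårding cone Γ_r is a convex subset of the space of symmetric matrices. -/

import Mathlib

/-!
The cone `Γ_r ⊆ ℝⁿ` is convex and invariant under permutations of the coordinates, and this passes
to matrices by Schur's theorem: if `C = t A + (1 - t) B` and `U` is an orthonormal eigenbasis of
`C`, then `λ(C) = t diag(Uᵀ A U) + (1 - t) diag(Uᵀ B U)`, where `diag(Uᵀ A U)` is the image of
`λ(A)` under a doubly stochastic matrix. By Birkhoff's theorem that image is a convex combination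
of permutations of `λ(A)`, so it lies in `Γ_r` (`diag_mem_gardingCone`), and likewise for `B`.

Convexity of `Γ_r` in `ℝⁿ` follows Marcus and Lopes. Write `q_k = S_{k+1} / S_k`, and let `x|i` be
`x` with its `i`-th coordinate deleted. Euler's identity gives
`(k + 2) q_{k+1}(x) = ∑ i, (x_i - x_i² / (x_i + q_k(x|i)))`,
and since `(a, c) ↦ a² / c` is subadditive and decreasing in `c > 0`, superadditivity of `q_k` on
`Γ_k` implies that of `q_{k+1}` on `Γ_{k+1}` (`cone_add_and_quot_superadditive`). Positivity of
`q_k` is what separates `Γ_{k+1}` from `Γ_k`, so each `Γ_k` is closed under addition. The recursion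
needs `x|i ∈ Γ_k` for `x ∈ Γ_{k+1}` (`mem_coneOn_erase`), which comes from the inequality
`S_k S_{k+2} ≤ S_{k+1}²`, a consequence of Rolle's theorem and Laguerre's inequality for
real-rooted polynomials (`newton_weak`).
-/


/-- The `r`-th elementary symmetric function of `x : Fin n → ℝ`. -/
def esymm (n r : ℕ) (x : Fin n → ℝ) : ℝ :=
  ∑ s ∈ Finset.powersetCard r (Finset.univ : Finset (Fin n)), ∏ i ∈ s, x i

/-- The Gårding cone `Γ_r = {x ∈ ℝⁿ : S_j(x) > 0 for j = 1, …, r}`. -/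
def gardingCone (n r : ℕ) : Set (Fin n → ℝ) :=
  {x | ∀ j : ℕ, 1 ≤ j → j ≤ r → 0 < esymm n j x}

/-! ### Elementary symmetric functions on finite index sets -/

/-- `esymmOn s k x` is the `k`-th elementary symmetric function of the variables `x i`, `i ∈ s`.
Restricting the index set (rather than the vector) makes deleting a variable `s.erase i`. -/
def esymmOn {ι : Type*} (s : Finset ι) (k : ℕ) (x : ι → ℝ) : ℝ :=
  ∑ t ∈ s.powersetCard k, ∏ i ∈ t, x i

section Basic

variable {ι : Type*}

lemma esymmOn_zero (s : Finset ι) (x : ι → ℝ) : esymmOn s 0 x = 1 := by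
  simp [esymmOn]

lemma esymmOn_one (s : Finset ι) (x : ι → ℝ) : esymmOn s 1 x = ∑ i ∈ s, x i := by
  simp [esymmOn, Finset.powersetCard_one]

lemma esymmOn_smul (s : Finset ι) (k : ℕ) (c : ℝ) (x : ι → ℝ) :
    esymmOn s k (c • x) = c ^ k * esymmOn s k x := by
  unfold esymmOn
  rw [Finset.mul_sum]
  refine Finset.sum_congr rfl fun t ht => ?_
  rw [← (Finset.mem_powersetCard.1 ht).2]
  simp [Finset.prod_mul_distrib]

variable [DecidableEq ι]

lemma esymmOn_insert {s : Finset ι} {a : ι} (ha : a ∉ s) (k : ℕ) (x : ι → ℝ) :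
    esymmOn (insert a s) (k + 1) x = x a * esymmOn s k x + esymmOn s (k + 1) x := by
  unfold esymmOn
  have hmem : ∀ t ∈ s.powersetCard k, a ∉ t := fun t ht h =>
    ha ((Finset.mem_powersetCard.1 ht).1 h)
  rw [Finset.powersetCard_succ_insert ha, Finset.sum_union, add_comm, Finset.sum_image]
  · congr 1
    rw [Finset.mul_sum]
    exact Finset.sum_congr rfl fun t ht => Finset.prod_insert (hmem t ht)
  · intro t ht u hu h
    rw [← Finset.erase_insert (hmem t ht), ← Finset.erase_insert (hmem u hu)]
    exact congrArg (fun v => v.erase a) h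
  · rw [Finset.disjoint_left]
    intro t ht ht'
    obtain ⟨u, -, rfl⟩ := Finset.mem_image.1 ht'
    exact ha ((Finset.mem_powersetCard.1 ht).1 (Finset.mem_insert_self a u))

/-- Expansion along one variable. -/
lemma esymmOn_erase {s : Finset ι} {a : ι} (ha : a ∈ s) (k : ℕ) (x : ι → ℝ) :
    esymmOn s (k + 1) x = x a * esymmOn (s.erase a) k x + esymmOn (s.erase a) (k + 1) x := by
  conv_lhs => rw [← Finset.insert_erase ha]
  exact esymmOn_insert (Finset.notMem_erase a s) k x

/-- Euler's identity for the homogeneous polynomial `S_{k+1}`, whose `i`-th partial derivative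
is `S_k` in the remaining variables. -/
lemma sum_mul_esymmOn_erase (s : Finset ι) (k : ℕ) (x : ι → ℝ) :
    ∑ i ∈ s, x i * esymmOn (s.erase i) k x = (k + 1) * esymmOn s (k + 1) x := by
  induction s using Finset.induction_on generalizing k with
  | empty =>
    have : (∅ : Finset ι).powersetCard (k + 1) = ∅ := Finset.powersetCard_eq_empty.2 (by simp)
    simp [esymmOn, this]
  | insert a s ha ih =>
    rw [Finset.sum_insert ha, Finset.erase_insert ha, esymmOn_insert ha]
    have hne : ∀ i ∈ s, (insert a s).erase i = insert a (s.erase i) := fun i hi =>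
      Finset.erase_insert_of_ne (fun h => ha (h ▸ hi))
    cases k with
    | zero =>
      simp [esymmOn_zero, esymmOn_one]
    | succ k =>
      have : ∑ i ∈ s, x i * esymmOn ((insert a s).erase i) (k + 1) x
          = x a * ∑ i ∈ s, x i * esymmOn (s.erase i) k x
            + ∑ i ∈ s, x i * esymmOn (s.erase i) (k + 1) x := by
        rw [Finset.mul_sum, ← Finset.sum_add_distrib]
        refine Finset.sum_congr rfl fun i hi => ?_
        rw [hne i hi, esymmOn_insert (fun h => ha (Finset.mem_of_mem_erase h))]
        ring
      rw [this, ih, ih]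
      push_cast
      ring

end Basic

/-! ### Newton's inequality -/

section Newton

open Polynomial

lemma splits_derivative {p : ℝ[X]} (hp : p.Splits) : (derivative p).Splits := by
  rw [splits_iff_card_roots] at hp ⊢
  have h1 := card_roots_le_derivative p
  have h2 := card_roots' (derivative p)
  have h3 := natDegree_derivative_le p
  rcases Nat.eq_zero_or_pos p.natDegree with h | h
  · have : derivative p = 0 := derivative_of_natDegree_zero h
    simp [this]
  · omega

lemma splits_iterate_derivative {p : ℝ[X]} (hp : p.Splits) (m : ℕ) :
    (derivative^[m] p).Splits := by
  induction m with
  | zero => exact hp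
  | succ m ih => rw [Function.iterate_succ_apply']; exact splits_derivative ih

/-- Laguerre's inequality. The expression `L(p) = p'² - p p''` satisfies
`L(pq) = q² L(p) + p² L(q)`, so it is enough to check constants and linear factors. -/
lemma laguerre {p : ℝ[X]} (hp : p.Splits) (y : ℝ) :
    p.eval y * (derivative (derivative p)).eval y ≤ (derivative p).eval y ^ 2 := by
  induction hp using Submonoid.closure_induction with
  | mem p hp =>
    rcases hp with ⟨a, rfl⟩ | ⟨a, rfl⟩ <;> simp
  | one => simp
  | mul p q _ _ hp hq =>
    simp only [derivative_mul, derivative_add, eval_add, eval_mul]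
    nlinarith [mul_le_mul_of_nonneg_left hp (sq_nonneg (q.eval y)),
      mul_le_mul_of_nonneg_left hq (sq_nonneg (p.eval y))]

/-- A weak form of Newton's inequalities: Laguerre's inequality at `0` for the derivative of
`∏ (X + x i)` whose three lowest coefficients are multiples of `S_{k+2}`, `S_{k+1}`, `S_k`. -/
lemma newton_weak {ι : Type*} (s : Finset ι) (k : ℕ) (x : ι → ℝ) :
    esymmOn s k x * esymmOn s (k + 2) x ≤ esymmOn s (k + 1) x ^ 2 := by
  rcases lt_or_ge s.card (k + 2) with h | h
  · have : esymmOn s (k + 2) x = 0 := by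
      simp [esymmOn, Finset.powersetCard_eq_empty.2 h]
    rw [this, mul_zero]
    positivity
  obtain ⟨m, hm⟩ := Nat.exists_eq_add_of_le h
  set p : ℝ[X] := ∏ i ∈ s, (X + C (x i)) with hp
  have hs : p.Splits := Splits.prod fun i _ => Splits.X_add_C (x i)
  have c0 : p.coeff m = esymmOn s (k + 2) x := by
    rw [hp, Finset.prod_X_add_C_coeff s x (by omega), show s.card - m = k + 2 by omega]; rfl
  have c1 : p.coeff (m + 1) = esymmOn s (k + 1) x := by
    rw [hp, Finset.prod_X_add_C_coeff s x (by omega), show s.card - (m + 1) = k + 1 by omega]; rfl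
  have c2 : p.coeff (m + 2) = esymmOn s k x := by
    rw [hp, Finset.prod_X_add_C_coeff s x (by omega), show s.card - (m + 2) = k by omega]; rfl
  have key := laguerre (splits_iterate_derivative hs m) 0
  rw [← Function.iterate_succ_apply' derivative, ← Function.iterate_succ_apply' derivative] at key
  simp only [← coeff_zero_eq_eval_zero, coeff_iterate_derivative, zero_add,
    Nat.descFactorial_self, c0, c1, c2, Nat.succ_eq_add_one, show m + 1 + 1 = m + 2 from rfl,
    nsmul_eq_mul] at key
  rw [Nat.factorial_succ (m + 1), Nat.factorial_succ m] at key
  push_cast at key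
  have hf : (0 : ℝ) < (m.factorial : ℝ) ^ 2 * (m + 1) := by positivity
  have key2 : (m + 2 : ℝ) * (esymmOn s k x * esymmOn s (k + 2) x)
      ≤ (m + 1) * esymmOn s (k + 1) x ^ 2 := by
    refine le_of_mul_le_mul_left ?_ hf
    linarith
  have hm0 : (0 : ℝ) ≤ m := m.cast_nonneg
  rcases le_total (esymmOn s k x * esymmOn s (k + 2) x) 0 with h0 | h0
  · exact h0.trans (sq_nonneg _)
  · nlinarith

end Newton

/-! ### Convexity of the cone of vectors -/

section Cone

variable {ι : Type*}

/-- The Gårding cone `Γ_k` in the variables indexed by `s`; the condition at `j = 0` is vacuous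
because `S_0 = 1`. -/
def coneOn (s : Finset ι) (k : ℕ) : Set (ι → ℝ) :=
  {x | ∀ j ≤ k, 0 < esymmOn s j x}

lemma coneOn_mono {s : Finset ι} {k l : ℕ} (h : k ≤ l) {x : ι → ℝ} (hx : x ∈ coneOn s l) :
    x ∈ coneOn s k := fun j hj => hx j (hj.trans h)

lemma coneOn_succ {s : Finset ι} {k : ℕ} {x : ι → ℝ} (hx : x ∈ coneOn s k)
    (h : 0 < esymmOn s (k + 1) x) : x ∈ coneOn s (k + 1) := by
  intro j hj
  rcases Nat.le_succ_iff.1 hj with h' | rfl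
  · exact hx j h'
  · exact h

variable [DecidableEq ι]

/-- Deleting a variable maps `Γ_{k+1}` into `Γ_k`. If `S_{k+1}` of the remaining variables were
nonpositive, then positivity of `S_{k+1}` and `S_{k+2}` of all the variables would contradict
Newton's inequality for the remaining ones. -/
lemma mem_coneOn_erase {s : Finset ι} {i : ι} (hi : i ∈ s) (k : ℕ) {x : ι → ℝ}
    (hx : x ∈ coneOn s (k + 1)) : x ∈ coneOn (s.erase i) k := by
  induction k with
  | zero =>
    intro j hj
    obtain rfl : j = 0 := by omega
    simp [esymmOn_zero]
  | succ k ih =>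
    have hk := ih (coneOn_mono (by omega) hx)
    refine coneOn_succ hk ?_
    have h1 := hx (k + 1) (by omega)
    have h2 := hx (k + 2) (by omega)
    rw [esymmOn_erase hi] at h1 h2
    have hN := newton_weak (s.erase i) k x
    have h0 := hk k le_rfl
    by_contra! hneg
    generalize esymmOn (s.erase i) k x = a at *
    generalize esymmOn (s.erase i) (k + 1) x = b at *
    generalize esymmOn (s.erase i) (k + 2) x = c at *
    have e1 : 0 < a * (x i * b + c) := mul_pos h0 h2
    have e2 : b * (x i * a + b) ≤ 0 := mul_nonpos_of_nonpos_of_nonneg hneg h1.le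
    nlinarith

/-- The quotient `S_{k+1} / S_k`. -/
noncomputable def esymmQuot {ι : Type*} (s : Finset ι) (k : ℕ) (x : ι → ℝ) : ℝ :=
  esymmOn s (k + 1) x / esymmOn s k x

lemma add_quot_erase {s : Finset ι} {i : ι} (hi : i ∈ s) {k : ℕ} {x : ι → ℝ}
    (hx : x ∈ coneOn s (k + 1)) :
    x i + esymmQuot (s.erase i) k x = esymmOn s (k + 1) x / esymmOn (s.erase i) k x := by
  have h := mem_coneOn_erase hi k hx k le_rfl
  rw [esymmQuot, esymmOn_erase hi]
  field_simp

lemma add_quot_erase_pos {s : Finset ι} {i : ι} (hi : i ∈ s) {k : ℕ} {x : ι → ℝ}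
    (hx : x ∈ coneOn s (k + 1)) : 0 < x i + esymmQuot (s.erase i) k x := by
  rw [add_quot_erase hi hx]
  exact div_pos (hx _ le_rfl) (mem_coneOn_erase hi k hx k le_rfl)

/-- The recursion that drives the induction: each quotient is expressed through the preceding
quotients in one variable less, in a way that is monotone in them. -/
lemma quot_succ {s : Finset ι} {k : ℕ} {x : ι → ℝ} (hx : x ∈ coneOn s (k + 1)) :
    (k + 2) * esymmQuot s (k + 1) x
      = ∑ i ∈ s, (x i - x i ^ 2 / (x i + esymmQuot (s.erase i) k x)) := by
  have h1 := hx (k + 1) le_rfl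
  have hE := sum_mul_esymmOn_erase s (k + 1) x
  have : (k + 2) * esymmQuot s (k + 1) x
      = (∑ i ∈ s, x i * esymmOn (s.erase i) (k + 1) x) / esymmOn s (k + 1) x := by
    rw [hE, esymmQuot]
    push_cast
    ring
  rw [this, Finset.sum_div]
  refine Finset.sum_congr rfl fun i hi => ?_
  have h2 := mem_coneOn_erase hi k hx k le_rfl
  have h3 := esymmOn_erase hi k x
  rw [add_quot_erase hi hx]
  field_simp
  rw [h3]
  ring

lemma add_sq_div_le {a b c d e : ℝ} (hc : 0 < c) (hd : 0 < d) (he : c + d ≤ e) :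
    (a + b) ^ 2 / e ≤ a ^ 2 / c + b ^ 2 / d := by
  calc (a + b) ^ 2 / e ≤ (a + b) ^ 2 / (c + d) := by gcongr
    _ ≤ a ^ 2 / c + b ^ 2 / d := by
      rw [div_add_div _ _ hc.ne' hd.ne', div_le_div_iff₀ (by positivity) (by positivity)]
      nlinarith [mul_nonneg (mul_nonneg hc.le hd.le) (sq_nonneg (a * d - b * c)),
        sq_nonneg (a * d - b * c)]

/-- `Γ_k` is closed under addition and `S_{k+1} / S_k` is superadditive on it. -/
lemma cone_add_and_quot_superadditive (k : ℕ) :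
    ∀ (s : Finset ι) (x y : ι → ℝ), x ∈ coneOn s k → y ∈ coneOn s k →
      x + y ∈ coneOn s k ∧ esymmQuot s k x + esymmQuot s k y ≤ esymmQuot s k (x + y) := by
  induction k with
  | zero =>
    intro s x y _ _
    refine ⟨fun j hj => ?_, ?_⟩
    · obtain rfl : j = 0 := by omega
      simp [esymmOn_zero]
    · simp [esymmQuot, esymmOn_zero, esymmOn_one, Finset.sum_add_distrib]
  | succ k ih =>
    intro s x y hx hy
    have hquot_pos : ∀ z ∈ coneOn s (k + 1), 0 < esymmQuot s k z := fun z hz =>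
      div_pos (hz (k + 1) le_rfl) (hz k (by omega))
    obtain ⟨hk, hq⟩ := ih s x y (coneOn_mono (by omega) hx) (coneOn_mono (by omega) hy)
    have hxy : x + y ∈ coneOn s (k + 1) := by
      refine coneOn_succ hk ?_
      have : 0 < esymmQuot s k (x + y) := by linarith [hquot_pos x hx, hquot_pos y hy]
      exact (div_pos_iff_of_pos_right (hk k le_rfl)).1 this
    refine ⟨hxy, ?_⟩
    have hpos : (0 : ℝ) < k + 2 := by positivity
    refine le_of_mul_le_mul_left ?_ hpos
    rw [mul_add, quot_succ hx, quot_succ hy, quot_succ hxy, ← Finset.sum_add_distrib]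
    refine Finset.sum_le_sum fun i hi => ?_
    have hi' := (ih (s.erase i) x y (mem_coneOn_erase hi k hx) (mem_coneOn_erase hi k hy)).2
    have := add_sq_div_le (a := x i) (b := y i) (e := (x + y) i + esymmQuot (s.erase i) k (x + y))
      (add_quot_erase_pos hi hx) (add_quot_erase_pos hi hy) (by
        rw [Pi.add_apply]; linarith)
    rw [Pi.add_apply] at this ⊢
    linarith

lemma convex_coneOn (s : Finset ι) (k : ℕ) : Convex ℝ (coneOn s k) := by
  rw [convex_iff_forall_pos]
  intro x hx y hy a b ha hb _
  refine (cone_add_and_quot_superadditive k s _ _ ?_ ?_).1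
  · intro j hj
    rw [esymmOn_smul]
    exact mul_pos (pow_pos ha j) (hx j hj)
  · intro j hj
    rw [esymmOn_smul]
    exact mul_pos (pow_pos hb j) (hy j hj)

end Cone

/-! ### The cone in `ℝⁿ` and its permutation invariance -/

lemma gardingCone_eq_coneOn (n r : ℕ) : gardingCone n r = coneOn Finset.univ r := by
  ext x
  refine ⟨fun h j hj => ?_, fun h j _ hj => h j hj⟩
  rcases Nat.eq_zero_or_pos j with rfl | h0
  · simp [esymmOn_zero]
  · exact h j h0 hj

lemma convex_gardingCone (n r : ℕ) : Convex ℝ (gardingCone n r) := by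
  rw [gardingCone_eq_coneOn]
  exact convex_coneOn _ _

lemma esymm_comp_perm (n r : ℕ) (x : Fin n → ℝ) (σ : Equiv.Perm (Fin n)) :
    esymm n r (x ∘ σ) = esymm n r x := by
  unfold esymm
  refine Finset.sum_bij (fun s _ => s.map σ.toEmbedding) ?_ ?_ ?_ ?_
  · intro s hs
    simpa [Finset.mem_powersetCard] using hs
  · intro s _ t _ h
    exact Finset.map_injective _ h
  · intro t ht
    refine ⟨t.map σ.symm.toEmbedding, ?_, ?_⟩
    · simpa [Finset.mem_powersetCard] using ht
    · ext i; simp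
  · intro s _
    simp

lemma comp_perm_mem_gardingCone {n r : ℕ} {x : Fin n → ℝ} (hx : x ∈ gardingCone n r)
    (σ : Equiv.Perm (Fin n)) : x ∘ σ ∈ gardingCone n r := by
  intro j h1 h2
  rw [esymm_comp_perm]
  exact hx j h1 h2

/-! ### Schur's theorem and Birkhoff's theorem -/

section Matrices

open Matrix

lemma mulVec_mem_gardingCone {n r : ℕ} {M : Matrix (Fin n) (Fin n) ℝ}
    (hM : M ∈ doublyStochastic ℝ (Fin n)) {x : Fin n → ℝ} (hx : x ∈ gardingCone n r) :
    M *ᵥ x ∈ gardingCone n r := by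
  obtain ⟨w, hw0, hw1, rfl⟩ := exists_eq_sum_perm_of_mem_doublyStochastic hM
  have h := (convex_gardingCone n r).sum_mem (t := Finset.univ) (w := w)
    (z := fun σ => σ.permMatrix ℝ *ᵥ x) (fun σ _ => hw0 σ) hw1 (fun σ _ => by
      rw [Matrix.permMatrix_mulVec]
      exact comp_perm_mem_gardingCone hx σ)
  simpa [Matrix.sum_mulVec, Matrix.smul_mulVec] using h

/-- The matrix of squared entries of an orthogonal matrix is doubly stochastic. -/
lemma sq_mem_doublyStochastic {n : ℕ} {W : Matrix (Fin n) (Fin n) ℝ} (h1 : W * Wᵀ = 1)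
    (h2 : Wᵀ * W = 1) : (Matrix.of fun i j => W i j ^ 2) ∈ doublyStochastic ℝ (Fin n) := by
  rw [mem_doublyStochastic_iff_sum]
  refine ⟨fun i j => sq_nonneg _, fun i => ?_, fun j => ?_⟩
  · have := congrFun (congrFun h1 i) i
    simpa [Matrix.mul_apply, sq] using this
  · have := congrFun (congrFun h2 j) j
    simpa [Matrix.mul_apply, sq] using this

/-- Schur's theorem: in any orthonormal basis, the diagonal of a symmetric matrix is the image of
its eigenvalue vector under a doubly stochastic matrix. -/
lemma diag_mem_gardingCone {n r : ℕ} {A U : Matrix (Fin n) (Fin n) ℝ} (hA : A.IsHermitian)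
    (hU1 : U * Uᵀ = 1) (hU2 : Uᵀ * U = 1) (hx : hA.eigenvalues ∈ gardingCone n r) :
    (Uᵀ * A * U).diag ∈ gardingCone n r := by
  set V : Matrix (Fin n) (Fin n) ℝ := ↑hA.eigenvectorUnitary with hV
  have hV1 : V * Vᵀ = 1 := by
    simpa [Matrix.star_eq_conjTranspose] using Unitary.coe_mul_star_self hA.eigenvectorUnitary
  have hV2 : Vᵀ * V = 1 := by
    simpa [Matrix.star_eq_conjTranspose] using Unitary.coe_star_mul_self hA.eigenvectorUnitary
  have hsp : A = V * diagonal hA.eigenvalues * Vᵀ := by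
    have := hA.spectral_theorem
    rw [Unitary.conjStarAlgAut_apply] at this
    simpa [Matrix.star_eq_conjTranspose, Function.comp_def] using this
  have hW := sq_mem_doublyStochastic (W := Uᵀ * V)
    (by rw [transpose_mul, transpose_transpose, Matrix.mul_assoc, ← Matrix.mul_assoc V, hV1,
          Matrix.one_mul, hU2])
    (by rw [transpose_mul, transpose_transpose, Matrix.mul_assoc, ← Matrix.mul_assoc U, hU1,
          Matrix.one_mul, hV2])
  convert mulVec_mem_gardingCone hW hx using 1
  have e : Uᵀ * A * U = (Uᵀ * V) * diagonal hA.eigenvalues * (Uᵀ * V)ᵀ := by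
    conv_lhs => rw [hsp]
    simp only [transpose_mul, transpose_transpose, Matrix.mul_assoc]
  rw [e]
  ext i
  rw [diag_apply, Matrix.mul_apply]
  simp only [mul_diagonal, transpose_apply, mulVec, dotProduct, of_apply]
  exact Finset.sum_congr rfl fun j _ => by ring

end Matrices

/-! ### Convexity of the cone of matrices -/

/-- For `n ≥ 1` and `1 ≤ r ≤ n`, the set `𝒮_r` of real symmetric `n×n` matrices whose
eigenvalues lie in the Gårding cone `Γ_r` is convex: if `A, B` are symmetric with
eigenvalue vectors in `Γ_r` and `t ∈ [0,1]`, then `t•A + (1−t)•B` is symmetric and its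
eigenvalue vector lies in `Γ_r`. -/
theorem matrixCone_convex (n r : ℕ) (hn : 1 ≤ n) (hr1 : 1 ≤ r) (hrn : r ≤ n)
    (A B : Matrix (Fin n) (Fin n) ℝ) (hA : A.IsHermitian) (hB : B.IsHermitian)
    (hAe : hA.eigenvalues ∈ gardingCone n r) (hBe : hB.eigenvalues ∈ gardingCone n r)
    (t : ℝ) (ht : t ∈ Set.Icc (0 : ℝ) 1) :
    ∃ hC : (t • A + (1 - t) • B).IsHermitian, hC.eigenvalues ∈ gardingCone n r := by
  have hC : (t • A + (1 - t) • B).IsHermitian := by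
    rw [Matrix.IsHermitian, Matrix.conjTranspose_add, Matrix.conjTranspose_smul,
      Matrix.conjTranspose_smul, hA.eq, hB.eq]
    simp only [star_trivial]
  refine ⟨hC, ?_⟩
  set U : Matrix (Fin n) (Fin n) ℝ := ↑hC.eigenvectorUnitary with hU
  have hU1 : U * U.transpose = 1 := by
    simpa [Matrix.star_eq_conjTranspose] using Unitary.coe_mul_star_self hC.eigenvectorUnitary
  have hU2 : U.transpose * U = 1 := by
    simpa [Matrix.star_eq_conjTranspose] using Unitary.coe_star_mul_self hC.eigenvectorUnitary
  have hd : U.transpose * (t • A + (1 - t) • B) * U = Matrix.diagonal hC.eigenvalues := by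
    have h := hC.conjStarAlgAut_star_eigenvectorUnitary
    rw [Unitary.conjStarAlgAut_apply] at h
    simpa [Matrix.star_eq_conjTranspose, Function.comp_def] using h
  have he : hC.eigenvalues = t • (U.transpose * A * U).diag
      + (1 - t) • (U.transpose * B * U).diag := by
    rw [← Matrix.diag_diagonal hC.eigenvalues, ← hd]
    simp [Matrix.mul_add, Matrix.add_mul]
  rw [he]
  exact convex_gardingCone n r (diag_mem_gardingCone hA hU1 hU2 hAe)
    (diag_mem_gardingCone hB hU1 hU2 hBe) ht.1 (sub_nonneg.2 ht.2) (by ring)
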